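/- arXiv:2105.10766 — 3 statements merged into one kernel-verified Lean document; each statement's English description precedes it below -/
import Mathlib

section
/- Let g be a compactly driven system with the USP, so that for every ←u ∈ ←U the set E(←u) is a singleton {h(←u)}, which defines a map h : ←U → X. Then h maps ←U onto X_U, h is continuous, and g(v, h(←u)) = h(σ_v(←u)) for all v ∈ U and all ←u ∈ ←U; that is, h is a universal semi-conjugacy. -/
open Metric Set Filter Topology Function

universe u' v'

variable {U : Type u'} {X : Type v'}

/-- `proc g u j m x = φ_ū(m+j, m, x)`: apply `g_{u m}, g_{u (m+1)}, …, g_{u (m+j-1)}`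
to `x`, in that order. -/
def proc (g : U → X → X) (u : ℤ → U) : ℕ → ℤ → X → X
  | 0, _, x => x
  | j + 1, m, x => g (u (m + j)) (proc g u j m x)

/-- A solution of the driven system `g` for the input `u`. -/
def IsSolution (g : U → X → X) (u : ℤ → U) (x : ℤ → X) : Prop :=
  ∀ n : ℤ, x (n + 1) = g (u n) (x n)

/-- The unique solution property: every input has exactly one solution. -/
def USP (g : U → X → X) : Prop :=
  ∀ u : ℤ → U, ∃! x : ℤ → X, IsSolution g u x

/-- The set of reachable states at time `n`: `X_n(ū) = ⋂_{j ≥ 1} φ_ū(n, n - j, X)`. -/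
def reach (g : U → X → X) (u : ℤ → U) (n : ℤ) : Set X :=
  ⋂ j : ℕ, Set.range (proc g u (j + 1) (n - (j + 1)))

/-- The reachable set `X_U = ⋃ {X_n(ū) : n ∈ ℤ, ū ∈ U^ℤ}`. -/
def reachSet (g : U → X → X) : Set X :=
  ⋃ u : ℤ → U, ⋃ n : ℤ, reach g u n

/-- The left-infinite part `←u^n = (…, u_{n-2}, u_{n-1})` of an input `u`;
coordinate `k : ℕ` corresponds to time `n - 1 - k` (so `0` is the most recent one). -/
def leftOf (u : ℤ → U) (n : ℤ) : ℕ → U := fun k => u (n - 1 - (k : ℤ))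

/-- The right-shift map `r : (…, u_{-2}, u_{-1}) ↦ (…, u_{-3}, u_{-2})`. -/
def shift (w : ℕ → U) : ℕ → U := fun k => w (k + 1)

/-- The concatenation map `σ_v : (…, u_{-2}, u_{-1}) ↦ (…, u_{-2}, u_{-1}, v)`. -/
def append (v : U) (w : ℕ → U) : ℕ → U := fun k => Nat.casesOn k v w

/-- `encProc g w j = φ_ū(0, -j, ·)` for any input `ū` whose left-infinite part is `w`. -/
def encProc (g : U → X → X) : (ℕ → U) → ℕ → X → X
  | _, 0, x => x
  | w, j + 1, x => g (w 0) (encProc g (shift w) j x)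

/-- The encoding map `E(←u) = X_0(ū) = ⋂_{j ≥ 1} φ_ū(0, -j, X)`. -/
def enc (g : U → X → X) (w : ℕ → U) : Set X :=
  ⋂ j : ℕ, Set.range (encProc g w (j + 1))

/-- The map `g̃_v : (…, x_{-2}, x_{-1}) ↦ (…, x_{-2}, x_{-1}, g(v, x_{-1}))`. -/
def tildeg (g : U → X → X) (v : U) (x : ℕ → X) : ℕ → X :=
  fun k => Nat.casesOn k (g v (x 0)) x

/-- The Hausdorff semi-distance `dist(A, B) = sup_{a ∈ A} inf_{b ∈ B} d(a, b)`. -/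
noncomputable def semiDist [MetricSpace X] (A B : Set X) : ℝ :=
  sSup ((fun a => Metric.infDist a B) '' A)

/-!
The states reachable along `w` are cut out by the conditions `x ∈ range (encProc g w (j + 1))`, each
of which is closed jointly in `w` and `x` because `X` is compact Hausdorff. So the encoding map has
closed graph and, `X` being compact, is upper hemicontinuous; for a singleton-valued map this is
continuity. Equivariance and surjectivity are formal: `g v` takes states with arbitrarily long
pasts along `w` to states with arbitrarily long pasts along `append v w`, and every left-infinite
sequence is the past of some bi-infinite input.
-/

section ClosedGraph

variable {Y Z K : Type*} [TopologicalSpace Y] [TopologicalSpace Z] [TopologicalSpace K]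
  [CompactSpace K]

theorem isClosed_setOf_mem_range [T2Space Z] {F : Y → K → Z}
    (hF : Continuous fun p : Y × K => F p.1 p.2) :
    IsClosed {p : Y × Z | p.2 ∈ range (F p.1)} := by
  have hgraph : IsClosed {q : (Y × Z) × K | F q.1.1 q.2 = q.1.2} :=
    isClosed_eq (hF.comp (continuous_fst.fst.prodMk continuous_snd)) continuous_fst.snd
  have hproj : {p : Y × Z | p.2 ∈ range (F p.1)} =
      Prod.fst '' {q : (Y × Z) × K | F q.1.1 q.2 = q.1.2} := by
    ext p
    simp
  rw [hproj]
  exact isClosedMap_fst_of_compactSpace _ hgraph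

theorem upperHemicontinuous_of_isClosed_graph {f : Y → Set K}
    (hf : IsClosed {p : Y × K | p.2 ∈ f p.1}) : UpperHemicontinuous f := by
  refine upperHemicontinuous_iff_isClosed_compl_preimage_Iic_compl.2 fun C hC => ?_
  have hproj : (f ⁻¹' Iic Cᶜ)ᶜ = Prod.fst '' ({p : Y × K | p.2 ∈ f p.1} ∩ Prod.snd ⁻¹' C) := by
    ext y
    simp [not_subset]
  rw [hproj]
  exact isClosedMap_fst_of_compactSpace _ (hf.inter (hC.preimage continuous_snd))

end ClosedGraph

section Reachable

theorem shift_leftOf (u : ℤ → U) (n : ℤ) : shift (leftOf u n) = leftOf u (n - 1) := by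
  funext k
  simp only [shift, leftOf, Nat.cast_add, Nat.cast_one]
  congr 1
  ring

theorem leftOf_surjective (n : ℤ) : Surjective fun u : ℤ → U => leftOf u n := by
  refine fun w => ⟨fun i => w (n - 1 - i).toNat, ?_⟩
  funext k
  simp [leftOf]

theorem proc_sub_eq_encProc (g : U → X → X) (u : ℤ → U) (j : ℕ) (n : ℤ) :
    proc g u j (n - j) = encProc g (leftOf u n) j := by
  induction j generalizing n with
  | zero => rfl
  | succ j ih =>
    funext x
    have hstart : n - (j + 1 : ℕ) = n - 1 - j := by push_cast; ring
    have hlast : u (n - 1 - j + j) = leftOf u n 0 := by simp [leftOf]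
    rw [hstart, proc, encProc, hlast, ih, shift_leftOf]

theorem reach_eq_enc_leftOf (g : U → X → X) (u : ℤ → U) (n : ℤ) :
    reach g u n = enc g (leftOf u n) :=
  iInter_congr fun j => by rw [← proc_sub_eq_encProc, Nat.cast_succ]

theorem reachSet_eq_iUnion_enc (g : U → X → X) : reachSet g = ⋃ w, enc g w := by
  simp_rw [reachSet, reach_eq_enc_leftOf]
  rw [iUnion_comm]
  simp_rw [(leftOf_surjective _).iUnion_comp (enc g), iUnion_const]

theorem mapsTo_enc_append (g : U → X → X) (v : U) (w : ℕ → U) :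
    MapsTo (g v) (enc g w) (enc g (append v w)) := by
  refine fun x hx => mem_iInter.2 fun j => ?_
  cases j with
  | zero => exact ⟨x, rfl⟩
  | succ j =>
    obtain ⟨y, rfl⟩ := mem_iInter.1 hx j
    exact ⟨y, rfl⟩

end Reachable

section Continuity

variable [TopologicalSpace U] [TopologicalSpace X] {g : U → X → X}

theorem continuous_shift : Continuous (shift : (ℕ → U) → ℕ → U) :=
  continuous_pi fun k => continuous_apply (k + 1)

theorem continuous_encProc (hg : Continuous fun p : U × X => g p.1 p.2) (j : ℕ) :
    Continuous fun p : (ℕ → U) × X => encProc g p.1 j p.2 := by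
  induction j with
  | zero => exact continuous_snd
  | succ j ih =>
    have hlast : Continuous fun p : (ℕ → U) × X => p.1 0 := by fun_prop
    exact hg.comp (hlast.prodMk (ih.comp (continuous_shift.prodMap continuous_id)))

theorem isClosed_graph_enc [CompactSpace X] [T2Space X]
    (hg : Continuous fun p : U × X => g p.1 p.2) :
    IsClosed {p : (ℕ → U) × X | p.2 ∈ enc g p.1} := by
  simp only [enc, mem_iInter, ofPred_forall]
  exact isClosed_iInter fun j =>
    isClosed_setOf_mem_range (F := fun w => encProc g w (j + 1)) (continuous_encProc hg (j + 1))

theorem upperHemicontinuous_enc [CompactSpace X] [T2Space X]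
    (hg : Continuous fun p : U × X => g p.1 p.2) : UpperHemicontinuous (enc g) :=
  upperHemicontinuous_of_isClosed_graph (isClosed_graph_enc hg)

end Continuity

theorem stmt_9_general [TopologicalSpace X] [CompactSpace X] [T2Space X] [TopologicalSpace U]
    (g : U → X → X) (hg : Continuous fun p : U × X => g p.1 p.2)
    (h : (ℕ → U) → X) (hh : ∀ w : ℕ → U, enc g w = {h w}) :
    Set.range h = reachSet g ∧ Continuous h ∧
      ∀ (v : U) (w : ℕ → U), g v (h w) = h (append v w) := by
  have henc : enc g = ({h ·}) := funext hh
  refine ⟨?_, ?_, fun v w => ?_⟩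
  · rw [reachSet_eq_iUnion_enc, henc, iUnion_singleton_eq_range]
  · rw [← upperHemicontinuous_singleton_iff, ← henc]
    exact upperHemicontinuous_enc hg
  · have hmem : h w ∈ enc g w := by simp [hh]
    simpa [hh] using mapsTo_enc_append g v w hmem

/-- under the USP, the map `h` defined by `E(←u) = {h(←u)}` is a universal
semi-conjugacy: it maps `←U` onto `X_U`, is continuous, and `g(v, h(←u)) = h(σ_v(←u))`. -/
theorem stmt_9 [MetricSpace X] [CompactSpace X] [MetricSpace U] [CompactSpace U]
    (g : U → X → X) (hg : Continuous fun p : U × X => g p.1 p.2)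
    (husp : USP g) (h : (ℕ → U) → X) (hh : ∀ w : ℕ → U, enc g w = {h w}) :
    Set.range h = reachSet g ∧ Continuous h ∧
      ∀ (v : U) (w : ℕ → U), g v (h w) = h (append v w) :=
  stmt_9_general g hg h hh
end

section
/- Let g be a compactly driven system without the USP. Suppose H : ←U → (X_U)^{ℤ<0} is a map (not assumed continuous) that is surjective onto (X_U)^{ℤ<0} and satisfies g̃_v ∘ H = H ∘ σ_v for every v ∈ U. Then H is discontinuous. -/
open Metric Set Filter Topology Function

universe u' v'

variable {U : Type u'} {X : Type v'}

/-!
Suppose `H` is continuous and let `h` be its most recent coordinate, so that `h ∘ σ_v = g_v ∘ h`.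
Then `n ↦ h (←u^n)` solves `g` for the input `u`. Let `x` be any solution. Its states are reachable,
so surjectivity gives `x (n - j) = h w` for some `w`; appending `u_{n-j}, …, u_{n-1}` to `w` gives a
point of the fibre of `h` over `x n` whose `j` most recent coordinates are those of `←u^n`.
As `j → ∞` these points tend to `←u^n`, and fibres of a continuous `h` are closed, so
`x n = h (←u^n)`: the solution is unique, and `g` has the USP.
-/

theorem mem_closure_of_cylinder_inter_nonempty {E : ℕ → Type*} [∀ i, TopologicalSpace (E i)]
    {s : Set (∀ i, E i)} {x : ∀ i, E i} (hs : ∀ n, (PiNat.cylinder x n ∩ s).Nonempty) :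
    x ∈ closure s := by
  choose y hy_cylinder hy_mem using hs
  have hy_tendsto : Tendsto y atTop (𝓝 x) := tendsto_pi_nhds.2 fun i =>
    tendsto_atTop_of_eventually_const (i₀ := i + 1) fun n hn => hy_cylinder n i hn
  exact mem_closure_of_tendsto hy_tendsto (Eventually.of_forall hy_mem)

theorem append_mem_cylinder_append (v : U) {w w' : ℕ → U} {j : ℕ}
    (hw : w ∈ PiNat.cylinder w' j) : append v w ∈ PiNat.cylinder (append v w') (j + 1)
  | 0, _ => rfl
  | k + 1, hk => hw k (Nat.lt_of_succ_lt_succ hk)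

theorem leftOf_add_one (u : ℤ → U) (n : ℤ) : leftOf u (n + 1) = append (u n) (leftOf u n) := by
  funext k
  cases k with
  | zero => simp [leftOf, append]
  | succ k =>
    simp only [leftOf, append]
    congr 1
    push_cast
    ring

theorem semiconj_eval_zero_tildeg (g : U → X → X) (v : U) :
    Semiconj (eval 0) (tildeg g v) (g v) :=
  fun _ => rfl

section Solutions

variable {g : U → X → X} {u : ℤ → U} {x : ℤ → X} {h : (ℕ → U) → X}

theorem IsSolution.proc_apply (hx : IsSolution g u x) (j : ℕ) (m : ℤ) :
    proc g u j m (x m) = x (m + j) := by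
  induction j with
  | zero => simp [proc]
  | succ j ih => rw [proc, ih, ← hx, Nat.cast_succ, add_assoc]

theorem IsSolution.mem_reach (hx : IsSolution g u x) (n : ℤ) : x n ∈ reach g u n :=
  mem_iInter.2 fun j => ⟨x (n - (j + 1)), by rw [hx.proc_apply, Nat.cast_succ, sub_add_cancel]⟩

theorem IsSolution.mem_reachSet (hx : IsSolution g u x) (n : ℤ) : x n ∈ reachSet g :=
  mem_iUnion₂.2 ⟨u, n, hx.mem_reach n⟩

theorem isSolution_of_semiconj (hsemi : ∀ v, Semiconj h (append v) (g v)) (u : ℤ → U) :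
    IsSolution g u fun n => h (leftOf u n) := by
  intro n
  simp only [leftOf_add_one, (hsemi (u n)).eq]

theorem IsSolution.cylinder_inter_preimage_nonempty (hx : IsSolution g u x)
    (hsemi : ∀ v, Semiconj h (append v) (g v)) (hrange : ∀ n, x n ∈ range h) (j : ℕ) (n : ℤ) :
    (PiNat.cylinder (leftOf u n) j ∩ h ⁻¹' {x n}).Nonempty := by
  induction j generalizing n with
  | zero => simpa [Set.Nonempty] using hrange n
  | succ j ih =>
    obtain ⟨m, rfl⟩ : ∃ m, n = m + 1 := ⟨n - 1, (sub_add_cancel n 1).symm⟩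
    obtain ⟨w, hw_cylinder, hw : h w = x m⟩ := ih m
    have h_append : h (append (u m) w) = x (m + 1) := by rw [(hsemi (u m)).eq, hw, hx]
    refine ⟨append (u m) w, ?_, h_append⟩
    rw [leftOf_add_one]
    exact append_mem_cylinder_append (u m) hw_cylinder

variable [TopologicalSpace U] [TopologicalSpace X] [T1Space X]

theorem IsSolution.eq_apply_leftOf (hx : IsSolution g u x)
    (hsemi : ∀ v, Semiconj h (append v) (g v)) (hrange : ∀ n, x n ∈ range h)
    (hcont : Continuous h) (n : ℤ) : x n = h (leftOf u n) := by
  have hfibre : IsClosed (h ⁻¹' {x n}) := isClosed_singleton.preimage hcont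
  have hmem : leftOf u n ∈ h ⁻¹' {x n} := hfibre.closure_subset <|
    mem_closure_of_cylinder_inter_nonempty fun j =>
      hx.cylinder_inter_preimage_nonempty hsemi hrange j n
  exact hmem.symm

theorem usp_of_continuous_semiconj (hsemi : ∀ v, Semiconj h (append v) (g v))
    (hrange : reachSet g ⊆ range h) (hcont : Continuous h) : USP g := fun u =>
  ⟨fun n => h (leftOf u n), isSolution_of_semiconj hsemi u, fun _ hx =>
    funext (hx.eq_apply_leftOf hsemi (fun n => hrange (hx.mem_reachSet n)) hcont)⟩

end Solutions

theorem stmt_14_general [TopologicalSpace U] [TopologicalSpace X] [T1Space X] {g : U → X → X}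
    (hnusp : ¬ USP g) {H : (ℕ → U) → ℕ → X}
    (hsurj : ∀ y : ℕ → X, (∀ k : ℕ, y k ∈ reachSet g) → ∃ w : ℕ → U, H w = y)
    (hcomm : ∀ v : U, tildeg g v ∘ H = H ∘ append v) :
    ¬ Continuous H := by
  intro hcont
  have hsemi (v : U) : Semiconj (eval 0 ∘ H) (append v) (g v) :=
    (semiconj_iff_comp_eq.2 (hcomm v).symm).trans (semiconj_eval_zero_tildeg g v)
  have hrange : reachSet g ⊆ range (eval 0 ∘ H) := fun a ha => by
    obtain ⟨w, hw⟩ := hsurj (fun _ => a) fun _ => ha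
    exact ⟨w, congrFun hw 0⟩
  exact hnusp (usp_of_continuous_semiconj hsemi hrange ((continuous_apply 0).comp hcont))

/-- if `g` does not have the USP and `H : ←U → (X_U)^{ℤ<0}` is surjective
onto `(X_U)^{ℤ<0}` with `g̃_v ∘ H = H ∘ σ_v` for every `v`, then `H` is discontinuous. -/
theorem stmt_14 [MetricSpace X] [CompactSpace X] [MetricSpace U] [CompactSpace U]
    (g : U → X → X) (hg : Continuous fun p : U × X => g p.1 p.2)
    (hnusp : ¬ USP g)
    (H : (ℕ → U) → ℕ → X) (hrange : ∀ (w : ℕ → U) (k : ℕ), H w k ∈ reachSet g)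
    (hsurj : ∀ y : ℕ → X, (∀ k : ℕ, y k ∈ reachSet g) → ∃ w : ℕ → U, H w = y)
    (hcomm : ∀ v : U, tildeg g v ∘ H = H ∘ append v) :
    ¬ Continuous H :=
  stmt_14_general hnusp hsurj hcomm
end

section
/- Let g be a driven system (U a metric space, not necessarily compact) such that the encoding map E : ←U → H_X is continuous (g has the GIRST), and suppose there exists at least one input v̄ ∈ U^ℤ having exactly one solution. Then g has the USP. -/
open Metric Set Filter Topology Function

universe u' v'

variable {U : Type u'} {X : Type v'}

/-!
Reachable states are exactly the values of solutions, so an input has a unique solution iff all its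
reachable sets are singletons. Modifying finitely many entries of a left-infinite input replaces
its reachable set by an image of an earlier one, so every input that agrees with `v̄` far enough in
the past has a singleton reachable set. Such inputs are dense, and being a singleton passes to
limits in the Hausdorff metric, so continuity of the encoding map does the rest.
-/

section Topology

theorem dense_setOf_eventually_eq_cofinite {ι : Type*} {A : ι → Type*}
    [∀ i, TopologicalSpace (A i)] (v : ∀ i, A i) :
    Dense {w : ∀ i, A i | ∀ᶠ i in cofinite, w i = v i} := by
  classical
  intro w
  have hlim : Tendsto (fun s : Finset ι => s.piecewise w v) atTop (𝓝 w) := by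
    refine tendsto_pi_nhds.2 fun i => tendsto_const_nhds.congr' ?_
    filter_upwards [eventually_ge_atTop {i}] with s hs
    exact (s.piecewise_eq_of_mem w v (Finset.singleton_subset_iff.1 hs)).symm
  refine mem_closure_of_tendsto hlim (Eventually.of_forall fun s => ?_)
  filter_upwards [s.finite_toSet.compl_mem_cofinite] with i hi
  exact s.piecewise_eq_of_notMem w v hi

theorem subsingleton_of_tendsto_hausdorffDist {ι Y : Type*} [MetricSpace Y] {l : Filter ι}
    {A : ι → Set Y} {B : Set Y} (hfin : ∀ i, hausdorffEDist (A i) B ≠ ⊤)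
    (hlim : Tendsto (fun i => hausdorffDist (A i) B) l (𝓝 0))
    (hA : ∃ᶠ i in l, (A i).Subsingleton) : B.Subsingleton := by
  refine fun a ha b hb => eq_of_forall_dist_le fun ε hε => ?_
  obtain ⟨i, hi, hclose⟩ := (hA.and_eventually (hlim.eventually_lt_const (half_pos hε))).exists
  obtain ⟨c, hc, hca⟩ := exists_dist_lt_of_hausdorffDist_lt' ha hclose (hfin i)
  obtain ⟨d, hd, hdb⟩ := exists_dist_lt_of_hausdorffDist_lt' hb hclose (hfin i)
  obtain rfl : c = d := hi hc hd
  linarith [dist_triangle_left a b c]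

end Topology

section Inputs

theorem shift_iterate_apply (w : ℕ → U) (k i : ℕ) : shift^[k] w i = w (i + k) := by
  induction k generalizing i with
  | zero => rfl
  | succ k ih => rw [iterate_succ_apply', shift, ih, add_right_comm, add_assoc]

theorem shift_iterate_leftOf (u : ℤ → U) (n : ℤ) (k : ℕ) :
    shift^[k] (leftOf u n) = leftOf u (n - k) := by
  funext i
  simp only [shift_iterate_apply, leftOf]
  congr 1
  push_cast
  ring

theorem exists_shift_iterate_eq_of_eventuallyEq {w w' : ℕ → U} (h : w =ᶠ[atTop] w') :
    ∃ k, shift^[k] w = shift^[k] w' := by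
  obtain ⟨k, hk⟩ := eventually_atTop.1 h
  refine ⟨k, funext fun i => ?_⟩
  simpa only [shift_iterate_apply] using hk (i + k) (Nat.le_add_left k i)

end Inputs

/-- `b` is a solution for the left-infinite input `w`. Like `w` it is indexed backwards in time:
`b k` is the state at time `-k`, reached from `b (k + 1)` under the input `w k` of time `-k - 1`. -/
def IsLeftSolution (g : U → X → X) (w : ℕ → U) (b : ℕ → X) : Prop :=
  ∀ k, b k = g (w k) (b (k + 1))

section LeftSolutions

variable {g : U → X → X} {w : ℕ → U} {b : ℕ → X}

theorem IsLeftSolution.map_shift (hb : IsLeftSolution g w b) :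
    IsLeftSolution g (shift w) (shift b) :=
  fun k => hb (k + 1)

theorem IsLeftSolution.map_shift_iterate (hb : IsLeftSolution g w b) (k : ℕ) :
    IsLeftSolution g (shift^[k] w) (shift^[k] b) := by
  induction k with
  | zero => exact hb
  | succ k ih => simpa only [iterate_succ_apply'] using ih.map_shift

theorem IsLeftSolution.encProc_eq (hb : IsLeftSolution g w b) (k : ℕ) :
    encProc g w k (b k) = b 0 := by
  induction k generalizing w b with
  | zero => rfl
  | succ k ih => exact (congrArg (g (w 0)) (ih hb.map_shift)).trans (hb 0).symm

theorem IsLeftSolution.mem_enc (hb : IsLeftSolution g w b) : b 0 ∈ enc g w :=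
  mem_iInter.2 fun j => ⟨b (j + 1), hb.encProc_eq (j + 1)⟩

theorem encProc_shift_iterate_eq {j k : ℕ} (hk : k < j) (y : X) :
    encProc g (shift^[k] w) (j - k) y =
      g (w k) (encProc g (shift^[k + 1] w) (j - (k + 1)) y) := by
  obtain ⟨i, rfl⟩ := Nat.exists_eq_add_of_lt hk
  have hsucc : k + i + 1 - k = i + 1 := by lia
  have hpred : k + i + 1 - (k + 1) = i := by lia
  rw [hsucc, hpred, encProc, shift_iterate_apply, zero_add, iterate_succ_apply']

section Compactness

variable [TopologicalSpace X] [CompactSpace X] [T2Space X]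

theorem exists_isLeftSolution_mem (hg : ∀ v, Continuous (g v)) {C : Set X} (hC : IsClosed C)
    (hreach : ∀ j, ∃ y, encProc g w j y ∈ C) : ∃ b, IsLeftSolution g w b ∧ b 0 ∈ C := by
  let S (j : ℕ) : Set (ℕ → X) := {b | b 0 ∈ C ∧ ∀ k < j, b k = g (w k) (b (k + 1))}
  have hclosed (j : ℕ) : IsClosed (S j) := by
    have hrec : IsClosed {b : ℕ → X | ∀ k < j, b k = g (w k) (b (k + 1))} := by
      simp only [ofPred_forall]
      exact isClosed_biInter fun k _ =>
        isClosed_eq (continuous_apply k) ((hg (w k)).comp (continuous_apply (k + 1)))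
    exact (hC.preimage (continuous_apply 0)).inter hrec
  have hne (j : ℕ) : (S j).Nonempty := by
    obtain ⟨y, hy⟩ := hreach j
    exact ⟨fun k => encProc g (shift^[k] w) (j - k) y, hy,
      fun k hk => encProc_shift_iterate_eq hk y⟩
  obtain ⟨b, hb⟩ := IsCompact.nonempty_iInter_of_sequence_nonempty_isCompact_isClosed S
    (fun j b hb => ⟨hb.1, fun k hk => hb.2 k (hk.trans j.lt_succ_self)⟩) hne
    (hclosed 0).isCompact hclosed
  rw [mem_iInter] at hb
  exact ⟨b, fun k => (hb (k + 1)).2 k k.lt_succ_self, (hb 0).1⟩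

theorem mem_enc_iff (hg : ∀ v, Continuous (g v)) {x : X} :
    x ∈ enc g w ↔ ∃ b, IsLeftSolution g w b ∧ b 0 = x := by
  refine ⟨fun hx => exists_isLeftSolution_mem hg isClosed_singleton fun j => ?_, ?_⟩
  · cases j with
    | zero => exact ⟨x, rfl⟩
    | succ j => exact mem_iInter.1 hx j
  · rintro ⟨b, hb, rfl⟩
    exact hb.mem_enc

theorem enc_nonempty [Nonempty X] (hg : ∀ v, Continuous (g v)) (w : ℕ → U) :
    (enc g w).Nonempty := by
  obtain ⟨b, hb, -⟩ := exists_isLeftSolution_mem (w := w) hg isClosed_univ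
    fun _ => ⟨Classical.arbitrary X, trivial⟩
  exact ⟨b 0, hb.mem_enc⟩

theorem enc_subset_image_encProc (hg : ∀ v, Continuous (g v)) (w : ℕ → U) (k : ℕ) :
    enc g w ⊆ encProc g w k '' enc g (shift^[k] w) := by
  intro x hx
  obtain ⟨b, hb, rfl⟩ := (mem_enc_iff hg).1 hx
  have hmem := (hb.map_shift_iterate k).mem_enc
  rw [shift_iterate_apply, zero_add] at hmem
  exact ⟨b k, hmem, hb.encProc_eq k⟩

end Compactness

end LeftSolutions

section Solutions

variable {g : U → X → X} {u : ℤ → U}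

theorem IsSolution.isLeftSolution {z : ℤ → X} (hz : IsSolution g u z) (n : ℤ) :
    IsLeftSolution g (leftOf u n) fun k => z (n - k) := by
  intro k
  have hnext : n - k = n - 1 - k + 1 := by ring
  have hprev : n - (k + 1 : ℕ) = n - 1 - k := by push_cast; ring
  simpa only [leftOf, hnext, hprev] using hz (n - 1 - k)

theorem IsLeftSolution.exists_isSolution {n : ℤ} {b : ℕ → X}
    (hb : IsLeftSolution g (leftOf u n) b) : ∃ z, IsSolution g u z ∧ z n = b 0 := by
  -- One of the two truncations `toNat` vanishes: `z` runs along `b` up to time `n`,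
  -- and along the forward orbit of `b 0` afterwards.
  refine ⟨fun m => proc g u (m - n).toNat n (b (n - m).toNat), fun m => ?_, by simp [proc]⟩
  rcases le_or_gt n m with hm | hm
  · obtain ⟨j, rfl⟩ := Int.le.dest hm
    have hfwd : (n + j + 1 - n).toNat = j + 1 := by lia
    have hbwd : (n - (n + j + 1)).toNat = (n - (n + j)).toNat := by lia
    simp only [hfwd, hbwd, add_sub_cancel_left, Int.toNat_natCast, proc]
  · obtain ⟨j, rfl⟩ : ∃ j : ℕ, m = n - 1 - j := ⟨(n - 1 - m).toNat, by lia⟩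
    have hfwd : (n - 1 - j + 1 - n).toNat = 0 := by lia
    have hfwd' : (n - 1 - j - n).toNat = 0 := by lia
    have hbwd : (n - (n - 1 - j + 1)).toNat = j := by lia
    have hbwd' : (n - (n - 1 - j)).toNat = j + 1 := by lia
    simp only [hfwd, hfwd', hbwd, hbwd', proc]
    exact hb j

variable [TopologicalSpace X] [CompactSpace X] [T2Space X]

theorem mem_enc_leftOf_iff (hg : ∀ v, Continuous (g v)) {n : ℤ} {x : X} :
    x ∈ enc g (leftOf u n) ↔ ∃ z, IsSolution g u z ∧ z n = x := by
  constructor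
  · intro hx
    obtain ⟨b, hb, rfl⟩ := (mem_enc_iff hg).1 hx
    exact hb.exists_isSolution
  · rintro ⟨z, hz, rfl⟩
    simpa using (hz.isLeftSolution n).mem_enc

theorem existsUnique_isSolution_iff [Nonempty X] (hg : ∀ v, Continuous (g v)) :
    (∃! z, IsSolution g u z) ↔ ∀ n, (enc g (leftOf u n)).Subsingleton := by
  constructor
  · intro hunique n x hx y hy
    obtain ⟨a, ha, rfl⟩ := (mem_enc_leftOf_iff hg).1 hx
    obtain ⟨b, hb, rfl⟩ := (mem_enc_leftOf_iff hg).1 hy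
    rw [hunique.unique ha hb]
  · intro hsub
    obtain ⟨x, hx⟩ := enc_nonempty hg (leftOf u 0)
    obtain ⟨z, hz, -⟩ := (mem_enc_leftOf_iff hg).1 hx
    exact ⟨z, hz, fun y hy => funext fun n =>
      hsub n ((mem_enc_leftOf_iff hg).2 ⟨y, hy, rfl⟩) ((mem_enc_leftOf_iff hg).2 ⟨z, hz, rfl⟩)⟩

theorem dense_setOf_subsingleton_enc [Nonempty X] [TopologicalSpace U]
    (hg : ∀ v, Continuous (g v)) (hu : ∃! z, IsSolution g u z) :
    Dense {w | (enc g w).Subsingleton} := by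
  refine (dense_setOf_eventually_eq_cofinite (leftOf u 0)).mono fun w hw => ?_
  rw [Nat.cofinite_eq_atTop] at hw
  obtain ⟨k, hk⟩ := exists_shift_iterate_eq_of_eventuallyEq hw
  have hpast : (enc g (shift^[k] w)).Subsingleton := by
    rw [hk, shift_iterate_leftOf]
    exact (existsUnique_isSolution_iff hg).1 hu _
  exact (hpast.image _).anti (enc_subset_image_encProc hg w k)

end Solutions

theorem stmt_18_general [MetricSpace X] [CompactSpace X] [TopologicalSpace U]
    (g : U → X → X) (hg : ∀ v, Continuous (g v))
    (hgirst : ∀ w : ℕ → U,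
      Tendsto (fun w' : ℕ → U => Metric.hausdorffDist (enc g w') (enc g w)) (𝓝 w) (𝓝 0))
    (hone : ∃ v : ℤ → U, ∃! x : ℤ → X, IsSolution g v x) :
    USP g := by
  obtain ⟨v, hv⟩ := hone
  have : Nonempty X := hv.exists.nonempty.map fun x => x 0
  have hsub (w : ℕ → U) : (enc g w).Subsingleton := by
    have hfin (w' : ℕ → U) : hausdorffEDist (enc g w') (enc g w) ≠ ⊤ :=
      hausdorffEDist_ne_top_of_nonempty_of_bounded (enc_nonempty hg w') (enc_nonempty hg w)
        (Bornology.IsBounded.all _) (Bornology.IsBounded.all _)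
    exact subsingleton_of_tendsto_hausdorffDist hfin (hgirst w)
      (mem_closure_iff_frequently.1 (dense_setOf_subsingleton_enc hg hv w))
  exact fun u => (existsUnique_isSolution_iff hg).2 fun n => hsub (leftOf u n)

/-- if `g` has the GIRST (the encoding map is continuous for the Hausdorff
metric) and some input has exactly one solution, then `g` has the USP. -/
theorem stmt_18 [MetricSpace X] [CompactSpace X] [MetricSpace U]
    (g : U → X → X) (hg : Continuous fun p : U × X => g p.1 p.2)
    (hgirst : ∀ w : ℕ → U,
      Tendsto (fun w' : ℕ → U => Metric.hausdorffDist (enc g w') (enc g w))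
        (𝓝 w) (𝓝 0))
    (hone : ∃ v : ℤ → U, ∃! x : ℤ → X, IsSolution g v x) :
    USP g :=
  stmt_18_general g (fun v => hg.comp (.prodMk_right v)) hgirst hone
end
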